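/- Let F be a Ferrers diagram of semiperimeter n+1, T ∈ EWtab(F), S = S(T) its supplementary tableau, and CanonTop(φ_TC(T)) = (U^0, V^1, U^1, …). If j ∈ rows(F) lies in U^ℓ and k ∈ cols(F) satisfies j < k, then k ∈ V^ℓ if and only if S_{jk} = 0 and this 0 (which, since j < k, is the entry T_{jk} of a cell of T) is not a cornersupport entry. -/

import Mathlib

open Classical

/-- A Ferrers diagram of semiperimeter `n + 1`, encoded by the set of its row labels
(labels `0, …, n` run along the south-east border; `0` labels the top row and the
last label `n` is a column label). -/
structure Ferrers (n : ℕ) where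
  rows : Finset (Fin (n + 1))
  zero_mem : 0 ∈ rows
  last_not_mem : Fin.last n ∉ rows

namespace Ferrers

/-- `(i, j)` is a cell of the diagram: `i` is a row label, `j` a column label, `i < j`. -/
def Cell {n : ℕ} (F : Ferrers n) (i j : Fin (n + 1)) : Prop :=
  i ∈ F.rows ∧ j ∉ F.rows ∧ i < j

/-- Adjacency in the Ferrers graph `G(F)`. -/
def Adj {n : ℕ} (F : Ferrers n) (u v : Fin (n + 1)) : Prop :=
  F.Cell u v ∨ F.Cell v u

/-- Degree of a vertex in `G(F)`. -/
noncomputable def deg {n : ℕ} (F : Ferrers n) (v : Fin (n + 1)) : ℕ :=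
  {u | F.Adj v u}.ncard

/-- Toppling a single vertex.  The height at the sink `0` is kept equal to `c 0`
(grains sent to the sink vanish); toppling the sink sends one grain to each of
its neighbours. -/
noncomputable def topple {n : ℕ} (F : Ferrers n) (c : Fin (n + 1) → ℕ)
    (v : Fin (n + 1)) : Fin (n + 1) → ℕ :=
  fun u =>
    if u = 0 then c 0
    else if u = v then c v - F.deg v
    else if F.Adj v u then c u + 1
    else c u

/-- Toppling the vertices of a list in order. -/
noncomputable def toppleList {n : ℕ} (F : Ferrers n) (c : Fin (n + 1) → ℕ)
    (l : List (Fin (n + 1))) : Fin (n + 1) → ℕ :=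
  l.foldl F.topple c

/-- Simultaneous toppling of a set of vertices. -/
noncomputable def toppleSet {n : ℕ} (F : Ferrers n) (c : Fin (n + 1) → ℕ)
    (S : Set (Fin (n + 1))) : Fin (n + 1) → ℕ :=
  fun u =>
    if u = 0 then c 0
    else c u + {w ∈ S | F.Adj w u}.ncard - if u ∈ S then F.deg u else 0

/-- A configuration is stable if every non-sink vertex has fewer grains than its degree. -/
def Stable {n : ℕ} (F : Ferrers n) (c : Fin (n + 1) → ℕ) : Prop :=
  ∀ v, v ≠ 0 → c v < F.deg v

/-- A Dhar (burning) ordering for `c`: an ordering `v₀ = 0, v₁, …, vₙ` of all the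
vertices such that each `vᵢ` (`i ≥ 1`) is unstable after toppling `v₀, …, v_{i-1}`. -/
def DharSeq {n : ℕ} (F : Ferrers n) (c : Fin (n + 1) → ℕ) (l : List (Fin (n + 1))) : Prop :=
  l.length = n + 1 ∧ l.Nodup ∧ l.head? = some 0 ∧
    ∀ i, ∀ h : i < l.length, 1 ≤ i →
      F.deg (l.get ⟨i, h⟩) ≤ F.toppleList c (l.take i) (l.get ⟨i, h⟩)

/-- Recurrent configurations (via Dhar's criterion).  The height at the sink is
normalised to `0`. -/
def Recurrent {n : ℕ} (F : Ferrers n) (c : Fin (n + 1) → ℕ) : Prop :=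
  c 0 = 0 ∧ F.Stable c ∧ ∃ l, F.DharSeq c l

/-- Minimal recurrent configurations: recurrent with minimal total number of grains. -/
def RecMin {n : ℕ} (F : Ferrers n) (c : Fin (n + 1) → ℕ) : Prop :=
  F.Recurrent c ∧ ∀ c', F.Recurrent c' → (∑ v, c v) ≤ ∑ v, c' v

/-- Canonical toppling: block `0` is `{0}` (the sink); from then on, blocks with odd
index are the sets of currently unstable column vertices and blocks with even index
the sets of currently unstable row vertices.  The first component is the configuration
just before toppling the block recorded in the second component. -/
noncomputable def canonAux {n : ℕ} (F : Ferrers n) (c : Fin (n + 1) → ℕ) :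
    ℕ → ((Fin (n + 1) → ℕ) × Set (Fin (n + 1)))
  | 0 => (c, {0})
  | k + 1 =>
    let c' := F.toppleSet (canonAux F c k).1 (canonAux F c k).2
    (c', {v | v ≠ 0 ∧ (if k % 2 = 0 then v ∉ F.rows else v ∈ F.rows) ∧ F.deg v ≤ c' v})

/-- The `k`-th block of the canonical toppling of `c`:
`canonTop F c 0 = U⁰ = {0}`, `canonTop F c (2i-1) = Vⁱ`, `canonTop F c (2i) = Uⁱ`. -/
noncomputable def canonTop {n : ℕ} (F : Ferrers n) (c : Fin (n + 1) → ℕ) (k : ℕ) :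
    Set (Fin (n + 1)) :=
  (F.canonAux c k).2

/-- The configuration just before toppling the `k`-th block of the canonical toppling. -/
noncomputable def canonConfig {n : ℕ} (F : Ferrers n) (c : Fin (n + 1) → ℕ) (k : ℕ) :
    Fin (n + 1) → ℕ :=
  (F.canonAux c k).1

/-- The index of the block of the canonical toppling of `c` containing `v`. -/
noncomputable def bIdx {n : ℕ} (F : Ferrers n) (c : Fin (n + 1) → ℕ) (v : Fin (n + 1)) : ℕ :=
  sInf {k | v ∈ F.canonTop c k}

/-- `T` is a EW-tableau on `F` (entries of non-cells are normalised to `false`):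
the top row contains only `1`s, every other row contains a `0`, and there is no
rectangle with two diagonally opposite `0`s and two `1`s in the other corners. -/
def IsEW {n : ℕ} (F : Ferrers n) (T : Fin (n + 1) → Fin (n + 1) → Bool) : Prop :=
  (∀ i j, ¬F.Cell i j → T i j = false) ∧
  (∀ j, F.Cell 0 j → T 0 j = true) ∧
  (∀ i, i ∈ F.rows → i ≠ 0 → ∃ j, F.Cell i j ∧ T i j = false) ∧
  (∀ i i' j j', F.Cell i j → F.Cell i j' → F.Cell i' j → F.Cell i' j' →
    T i j = T i' j' → T i j' = T i' j → T i j = T i j')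

/-- The configuration associated to a tableau: row vertices count the `1`s in their
row, column vertices count the `0`s in their column (the sink is normalised to `0`). -/
noncomputable def phiTC {n : ℕ} (F : Ferrers n) (T : Fin (n + 1) → Fin (n + 1) → Bool) :
    Fin (n + 1) → ℕ :=
  fun v =>
    if v = 0 then 0
    else if v ∈ F.rows then {j | F.Cell v j ∧ T v j = true}.ncard
    else {i | F.Cell i v ∧ T i v = false}.ncard

/-- The tableau associated to a (minimal recurrent) configuration: a cell `(i, j)`
gets a `1` exactly when `i` lies in an earlier block than `j` in the canonical
toppling of `c`. -/
noncomputable def phiCT {n : ℕ} (F : Ferrers n) (c : Fin (n + 1) → ℕ) :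
    Fin (n + 1) → Fin (n + 1) → Bool :=
  fun i j => if F.Cell i j ∧ F.bIdx c i < F.bIdx c j then true else false

/-- The supplementary tableau of `T`: `S i j = 1` exactly when the row vertex `i`
lies in an earlier block than the column vertex `j` in `CanonTop (φ_TC T)`. -/
noncomputable def suppS {n : ℕ} (F : Ferrers n) (T : Fin (n + 1) → Fin (n + 1) → Bool)
    (i j : Fin (n + 1)) : Bool :=
  if F.bIdx (F.phiTC T) i < F.bIdx (F.phiTC T) j then true else false

/-- The entry of `T` in cell `(j, k)` is a cornersupport entry. -/
def Cornersupport {n : ℕ} (F : Ferrers n) (T : Fin (n + 1) → Fin (n + 1) → Bool)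
    (j k : Fin (n + 1)) : Prop :=
  ∃ j' k', j' ∈ F.rows ∧ k' ∉ F.rows ∧ j' ≠ j ∧ k' ≠ k ∧
    F.suppS T j' k' = !(T j k) ∧ F.suppS T j' k = T j k ∧ F.suppS T j k' = T j k

/-- `ν_v(T)`: the number of non-cornersupport `0`s in row `v` (if `v` is a row label),
resp. non-cornersupport `1`s in column `v` (if `v` is a column label). -/
noncomputable def nu {n : ℕ} (F : Ferrers n) (T : Fin (n + 1) → Fin (n + 1) → Bool)
    (v : Fin (n + 1)) : ℕ :=
  if v ∈ F.rows then {k | F.Cell v k ∧ T v k = false ∧ ¬F.Cornersupport T v k}.ncard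
  else {i | F.Cell i v ∧ T i v = true ∧ ¬F.Cornersupport T i v}.ncard

/-- `μ_v(c)`: if `v ∈ Uⁱ`, the number of `k ∈ Vⁱ` with `k > v`; if `v ∈ Vⁱ`,
the number of `k ∈ U^{i-1}` with `k < v`.  In both cases the relevant block is the
one immediately preceding the block of `v`. -/
noncomputable def mu {n : ℕ} (F : Ferrers n) (c : Fin (n + 1) → ℕ) (v : Fin (n + 1)) : ℕ :=
  if v ∈ F.rows then {k | v < k ∧ k ∈ F.canonTop c (F.bIdx c v - 1)}.ncard
  else {k | k < v ∧ k ∈ F.canonTop c (F.bIdx c v - 1)}.ncard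

/-- The minimal recurrent configuration with the same canonical toppling as `c`:
if `j ∈ Uⁱ` then `minrec c j = |{ℓ ∈ Vᵏ : j < ℓ, k > i}|`, and if `j ∈ Vⁱ` then
`minrec c j = |{ℓ ∈ Uᵏ : ℓ < j, k ≥ i}|` (blocks `Vᵏ` sit at odd index `2k - 1`,
blocks `Uᵏ` at even index `2k`). -/
noncomputable def minrecFun {n : ℕ} (F : Ferrers n) (c : Fin (n + 1) → ℕ) :
    Fin (n + 1) → ℕ :=
  fun j =>
    if j = 0 then 0
    else if j ∈ F.rows then
      {l | j < l ∧ ∃ k, F.bIdx c j < 2 * k + 1 ∧ l ∈ F.canonTop c (2 * k + 1)}.ncard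
    else
      {l | l < j ∧ ∃ k, F.bIdx c j < 2 * k ∧ l ∈ F.canonTop c (2 * k)}.ncard

/-- The number of edges of `G(F)` (equivalently, the number of cells of `F`). -/
noncomputable def edgeCount {n : ℕ} (F : Ferrers n) : ℕ :=
  {p : Fin (n + 1) × Fin (n + 1) | F.Cell p.1 p.2}.ncard

end Ferrers

/-!
Reading a `1` in cell `(i, j)` as an arc `i → j` and a `0` as an arc `j → i` turns an EW-tableau
into an orientation of the Ferrers graph whose only source is `0` and which is acyclic because of
the rectangle condition. The configuration `φ_TC(T)` is the out-degree function, so a vertex becomes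
unstable exactly when all its in-neighbours have toppled. As arcs alternate between rows and
columns, every vertex other than the sink has an in-neighbour in the block just before its own.

A `0` in cell `(j, k)` is therefore a cornersupport exactly when two further blocks, one of rows and
one of columns, lie between those of `k` and `j`; going back twice from `j` produces the corners.
-/

namespace Ferrers

variable {n : ℕ} {F : Ferrers n} {T : Fin (n + 1) → Fin (n + 1) → Bool}
  {c c' : Fin (n + 1) → ℕ} {A B : Set (Fin (n + 1))} {k : ℕ} {u v : Fin (n + 1)}

/-! ### Canonical toppling of a stable configuration -/

lemma Adj.symm (h : F.Adj u v) : F.Adj v u := Or.symm h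

/-- Away from the sink, `c'` is the configuration obtained from `c` by toppling every vertex of `A`
exactly once. The balance is stated additively to avoid truncated subtraction. -/
def IsToppling (F : Ferrers n) (c : Fin (n + 1) → ℕ) (A : Set (Fin (n + 1)))
    (c' : Fin (n + 1) → ℕ) : Prop :=
  ∀ v, v ≠ 0 → c' v + (if v ∈ A then F.deg v else 0) = c v + {w ∈ A | F.Adj w v}.ncard

lemma isToppling_empty (F : Ferrers n) (c : Fin (n + 1) → ℕ) : F.IsToppling c ∅ c := by
  simp [IsToppling]

lemma IsToppling.toppleSet (h : F.IsToppling c A c') (hAB : Disjoint A B)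
    (hB : ∀ v ∈ B, v ≠ 0 → F.deg v ≤ c' v) : F.IsToppling c (A ∪ B) (F.toppleSet c' B) := by
  intro v hv
  have hcount : {w ∈ A ∪ B | F.Adj w v}.ncard
      = {w ∈ A | F.Adj w v}.ncard + {w ∈ B | F.Adj w v}.ncard := by
    rw [← Set.ncard_union_eq (hAB.mono (Set.sep_subset _ _) (Set.sep_subset _ _))]
    congr 1
    ext w
    exact or_and_right
  have hbalance := h v hv
  by_cases hvB : v ∈ B
  · have hvA : v ∉ A := Set.disjoint_right.1 hAB hvB
    have := hB v hvB hv
    rw [hcount]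
    simp only [Ferrers.toppleSet, Set.mem_union, hv, hvA, hvB, if_true, if_false, or_true]
      at hbalance ⊢
    omega
  · rw [hcount]
    simp only [Ferrers.toppleSet, Set.mem_union, hv, hvB, if_false, or_false]
    omega

lemma IsToppling.lt_deg_of_mem (h : F.IsToppling c A c') (hc : F.Stable c) (hv : v ≠ 0)
    (hvA : v ∈ A) : c' v < F.deg v := by
  have hle : {w ∈ A | F.Adj w v}.ncard ≤ F.deg v :=
    Set.ncard_le_ncard (fun w hw => hw.2.symm) (Set.toFinite _)
  have hbalance := h v hv
  have := hc v hv
  rw [if_pos hvA] at hbalance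
  omega

/-- The set of vertices toppled before the `k`-th block of the canonical toppling of `c`. -/
def toppledBefore (F : Ferrers n) (c : Fin (n + 1) → ℕ) (k : ℕ) : Set (Fin (n + 1)) :=
  {v | ∃ i < k, v ∈ F.canonTop c i}

lemma toppledBefore_zero (c : Fin (n + 1) → ℕ) : F.toppledBefore c 0 = ∅ := by
  simp [toppledBefore]

lemma toppledBefore_succ (c : Fin (n + 1) → ℕ) (k : ℕ) :
    F.toppledBefore c (k + 1) = F.toppledBefore c k ∪ F.canonTop c k := by
  ext v
  simp only [toppledBefore, Nat.lt_succ_iff_lt_or_eq, or_and_right, exists_or, exists_eq_left,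
    Set.mem_ofPred_eq, Set.mem_union]

lemma mem_canonTop_zero : v ∈ F.canonTop c 0 ↔ v = 0 := Iff.rfl

lemma mem_canonTop_succ :
    v ∈ F.canonTop c (k + 1) ↔
      v ≠ 0 ∧ (v ∈ F.rows ↔ Even (k + 1)) ∧ F.deg v ≤ F.canonConfig c (k + 1) v := by
  change (v ≠ 0 ∧ (if k % 2 = 0 then v ∉ F.rows else v ∈ F.rows) ∧ _) ↔ _
  rw [Nat.even_add_one, Nat.even_iff]
  split_ifs with h <;> simp [h, canonConfig, canonAux]

lemma mem_rows_iff_even_of_mem_canonTop (h : v ∈ F.canonTop c k) : v ∈ F.rows ↔ Even k := by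
  cases k with
  | zero => simp [mem_canonTop_zero.1 h, F.zero_mem]
  | succ k => exact (mem_canonTop_succ.1 h).2.1

lemma IsToppling.disjoint_canonTop
    (h : F.IsToppling c (F.toppledBefore c k) (F.canonConfig c k)) (hc : F.Stable c) :
    Disjoint (F.toppledBefore c k) (F.canonTop c k) := by
  cases k with
  | zero => simp [toppledBefore_zero]
  | succ k =>
    refine Set.disjoint_right.2 fun v hv hmem => ?_
    obtain ⟨hv0, -, hdeg⟩ := mem_canonTop_succ.1 hv
    exact (h.lt_deg_of_mem hc hv0 hmem).not_ge hdeg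

lemma Stable.isToppling_canonConfig (hc : F.Stable c) (k : ℕ) :
    F.IsToppling c (F.toppledBefore c k) (F.canonConfig c k) := by
  induction k with
  | zero => exact toppledBefore_zero (F := F) c ▸ F.isToppling_empty c
  | succ k ih =>
    rw [toppledBefore_succ]
    refine ih.toppleSet (ih.disjoint_canonTop hc) fun v hv hv0 => ?_
    cases k with
    | zero => exact absurd (mem_canonTop_zero.1 hv) hv0
    | succ k => exact (mem_canonTop_succ.1 hv).2.2

lemma Stable.disjoint_toppledBefore_canonTop (hc : F.Stable c) (k : ℕ) :
    Disjoint (F.toppledBefore c k) (F.canonTop c k) :=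
  (hc.isToppling_canonConfig k).disjoint_canonTop hc

lemma Stable.mem_canonTop_succ_iff (hc : F.Stable c) :
    v ∈ F.canonTop c (k + 1) ↔
      v ≠ 0 ∧ (v ∈ F.rows ↔ Even (k + 1)) ∧ v ∉ F.toppledBefore c (k + 1) ∧
        F.deg v ≤ c v + {w ∈ F.toppledBefore c (k + 1) | F.Adj w v}.ncard := by
  rw [mem_canonTop_succ]
  refine and_congr_right fun hv => and_congr_right fun _ => ?_
  have h := hc.isToppling_canonConfig (k + 1)
  by_cases hmem : v ∈ F.toppledBefore c (k + 1)
  · simpa [hmem] using h.lt_deg_of_mem hc hv hmem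
  · simp [← h v hv, hmem]

lemma Stable.bIdx_eq (hc : F.Stable c) (hv : v ∈ F.canonTop c k) : F.bIdx c v = k := by
  refine le_antisymm (Nat.sInf_le hv) (not_lt.1 fun hlt => ?_)
  have hfirst : F.bIdx c v ∈ {i | v ∈ F.canonTop c i} := Nat.sInf_mem ⟨k, hv⟩
  exact Set.disjoint_right.1 (hc.disjoint_toppledBefore_canonTop k) hv ⟨_, hlt, hfirst⟩

/-! ### The orientation defined by a tableau -/

/-- The orientation of the Ferrers graph given by the tableau `T`: a `1` in cell `(i, j)` is an arc
from row `i` to column `j`, a `0` is an arc from column `j` to row `i`. -/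
def Arc (F : Ferrers n) (T : Fin (n + 1) → Fin (n + 1) → Bool) (u v : Fin (n + 1)) : Prop :=
  (F.Cell u v ∧ T u v = true) ∨ (F.Cell v u ∧ T v u = false)

lemma Arc.adj (h : F.Arc T u v) : F.Adj u v := h.imp And.left And.left

lemma Arc.mem_rows_iff (h : F.Arc T u v) : u ∈ F.rows ↔ v ∉ F.rows := by
  rcases h with ⟨⟨hu, hv, -⟩, -⟩ | ⟨⟨hv, hu, -⟩, -⟩ <;> simp [hu, hv]

lemma Arc.asymm (h : F.Arc T u v) : ¬F.Arc T v u := by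
  unfold Arc Cell at *
  grind

lemma adj_iff_arc_or_arc : F.Adj u v ↔ F.Arc T u v ∨ F.Arc T v u := by
  unfold Adj Arc
  cases T u v <;> cases T v u <;> simp <;> tauto

lemma phiTC_eq_ncard_arc (hv : v ≠ 0) : F.phiTC T v = {u | F.Arc T v u}.ncard := by
  unfold phiTC Arc Cell
  by_cases h : v ∈ F.rows <;> simp [hv, h]

lemma deg_eq_phiTC_add_ncard_arc (hv : v ≠ 0) :
    F.deg v = F.phiTC T v + {u | F.Arc T u v}.ncard := by
  have hdisj : Disjoint {u | F.Arc T v u} {u | F.Arc T u v} :=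
    Set.disjoint_left.2 fun _ hout hin => hout.asymm hin
  rw [phiTC_eq_ncard_arc hv, ← Set.ncard_union_eq hdisj, deg]
  congr 1
  ext u
  exact adj_iff_arc_or_arc

lemma deg_le_phiTC_add_iff (hA : ∀ w ∈ A, ∀ u, F.Arc T u w → u ∈ A) (hv : v ≠ 0)
    (hvA : v ∉ A) :
    F.deg v ≤ F.phiTC T v + {w ∈ A | F.Adj w v}.ncard ↔ ∀ u, F.Arc T u v → u ∈ A := by
  have hsub : {w ∈ A | F.Adj w v} ⊆ {u | F.Arc T u v} := fun w ⟨hwA, hadj⟩ =>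
    (adj_iff_arc_or_arc.1 hadj).resolve_right fun h => hvA (hA w hwA v h)
  rw [deg_eq_phiTC_add_ncard_arc (T := T) hv, Nat.add_le_add_iff_left]
  constructor
  · intro hle u hu
    have heq := Set.eq_of_subset_of_ncard_le hsub hle
    exact (heq.ge hu).1
  · exact fun h => Set.ncard_le_ncard (fun u hu => ⟨h u hu, hu.adj⟩) (Set.toFinite _)

lemma IsEW.not_arc_zero (hT : F.IsEW T) (u : Fin (n + 1)) : ¬F.Arc T u 0 := by
  rintro (⟨⟨-, -, hlt⟩, -⟩ | ⟨hcell, hzero⟩)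
  · exact absurd hlt (Fin.not_lt_zero u)
  · simp [hT.2.1 u hcell] at hzero

lemma IsEW.exists_arc (hT : F.IsEW T) (hv : v ≠ 0) : ∃ u, F.Arc T u v := by
  obtain ⟨-, hTop, hZero, -⟩ := hT
  by_cases h : v ∈ F.rows
  · exact (hZero v h hv).imp fun _ => Or.inr
  · have hcell : F.Cell 0 v := ⟨F.zero_mem, h, Fin.pos_of_ne_zero hv⟩
    exact ⟨0, Or.inl ⟨hcell, hTop v hcell⟩⟩

lemma IsEW.stable_phiTC (hT : F.IsEW T) : F.Stable (F.phiTC T) := by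
  intro v hv
  have hpos : 0 < {u | F.Arc T u v}.ncard := (Set.ncard_pos (Set.toFinite _)).2 (hT.exists_arc hv)
  have := deg_eq_phiTC_add_ncard_arc (F := F) (T := T) hv
  omega

lemma IsEW.zeros_subset_or_subset (hT : F.IsEW T) {r r' : Fin (n + 1)} {C : Set (Fin (n + 1))}
    (hr : ∀ k ∈ C, F.Cell r k) (hr' : ∀ k ∈ C, F.Cell r' k) :
    {k ∈ C | T r k = false} ⊆ {k ∈ C | T r' k = false} ∨
      {k ∈ C | T r' k = false} ⊆ {k ∈ C | T r k = false} := by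
  by_contra! h
  simp only [Set.not_subset, Set.mem_ofPred_eq, not_and, Bool.not_eq_false] at h
  obtain ⟨⟨a, ⟨haC, hra⟩, hr'a⟩, b, ⟨hbC, hr'b⟩, hrb⟩ := h
  have := hT.2.2.2 r r' a b (hr a haC) (hr b hbC) (hr' a haC) (hr' b hbC)
    (hra.trans hr'b.symm) ((hrb hbC).trans (hr'a haC).symm)
  simp [hra, hrb hbC] at this

lemma IsEW.exists_row_forall_eq_true (hT : F.IsEW T) {R C : Set (Fin (n + 1))} (hR : R.Nonempty)
    (hcell : ∀ r ∈ R, ∀ k ∈ C, F.Cell r k) (hone : ∀ k ∈ C, ∃ r ∈ R, T r k = true) :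
    ∃ r ∈ R, ∀ k ∈ C, T r k = true := by
  obtain ⟨r, hr, hmin⟩ :=
    (Set.toFinite R).exists_minimalFor (fun r => {k ∈ C | T r k = false}) R hR
  refine ⟨r, hr, fun k hk => ?_⟩
  obtain ⟨r', hr', hone'⟩ := hone k hk
  have hsub : {k ∈ C | T r k = false} ⊆ {k ∈ C | T r' k = false} :=
    (hT.zeros_subset_or_subset (hcell r hr) (hcell r' hr')).elim id (hmin hr')
  by_contra hzero
  have := (hsub ⟨hk, Bool.eq_false_of_not_eq_true hzero⟩).2
  simp [hone'] at this

-- The dominated row `i` is the bottom row of `X`: every row of `X` has a cell in each column that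
-- meets row `i`, so by the rectangle condition some row has a `1` in all such columns of `X`.
lemma IsEW.exists_ne_forall_arc_of_forall_exists_arc (hT : F.IsEW T) {X : Finset (Fin (n + 1))}
    (hX : X.Nonempty) (hin : ∀ v ∈ X, ∃ u ∈ X, F.Arc T u v) :
    ∃ i ∈ X, ∃ r ∈ X, r ≠ i ∧ ∀ v ∈ X, F.Arc T i v → F.Arc T r v := by
  have hcol : ∀ k ∈ X, k ∉ F.rows → ∃ r ∈ X, F.Cell r k ∧ T r k = true := fun k hk hk' => by
    obtain ⟨r, hr, h | h⟩ := hin k hk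
    exacts [⟨r, hr, h⟩, absurd h.1.1 hk']
  have hrow : ∀ r ∈ X, r ∈ F.rows → ∃ k ∈ X, F.Cell r k ∧ T r k = false := fun r hr hr' => by
    obtain ⟨k, hk, h | h⟩ := hin r hr
    exacts [absurd hr' h.1.2.1, ⟨k, hk, h⟩]
  have hrows : {r ∈ X | r ∈ F.rows}.Nonempty := by
    obtain ⟨v, hv⟩ := hX
    by_cases h : v ∈ F.rows
    · exact ⟨v, Finset.mem_filter.2 ⟨hv, h⟩⟩
    · obtain ⟨r, hr, hc, -⟩ := hcol v hv h
      exact ⟨r, Finset.mem_filter.2 ⟨hr, hc.1⟩⟩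
  obtain ⟨i, hi, hmax⟩ := Finset.exists_max_image _ id hrows
  simp only [Finset.mem_filter, id, and_imp] at hi hmax
  have hcell : ∀ r ∈ X, r ∈ F.rows → ∀ k, F.Cell i k → F.Cell r k := fun r hrX hr k hk =>
    ⟨hr, hk.2.1, (hmax r hrX hr).trans_lt hk.2.2⟩
  obtain ⟨r, ⟨hrX, hr⟩, hone⟩ := hT.exists_row_forall_eq_true
    (R := {r | r ∈ X ∧ r ∈ F.rows}) (C := {k | k ∈ X ∧ F.Cell i k}) ⟨i, hi⟩
    (fun r hr k hk => hcell r hr.1 hr.2 k hk.2)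
    (fun k hk => (hcol k hk.1 hk.2.2.1).imp fun r h => ⟨⟨h.1, h.2.1.1⟩, h.2.2⟩)
  refine ⟨i, hi.1, r, hrX, ?_, fun v hv hiv => ?_⟩
  · rintro rfl
    obtain ⟨k, hk, hc, hzero⟩ := hrow r hrX hr
    simp [hone k ⟨hk, hc⟩] at hzero
  · have hc : F.Cell i v := hiv.elim And.left fun h => absurd hi.2 h.1.2.1
    exact Or.inl ⟨hcell r hrX hr v hc, hone v ⟨hv, hc⟩⟩

lemma IsEW.exists_source (hT : F.IsEW T) (X : Finset (Fin (n + 1))) (hX : X.Nonempty) :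
    ∃ v ∈ X, ∀ u ∈ X, ¬F.Arc T u v := by
  induction X using Finset.strongInduction with
  | H X ih =>
  by_contra! hin
  obtain ⟨i, hi, r, hr, hri, hdom⟩ := hT.exists_ne_forall_arc_of_forall_exists_arc hX hin
  have hr' : r ∈ X.erase i := Finset.mem_erase.2 ⟨hri, hr⟩
  obtain ⟨v, hv, hsource⟩ := ih (X.erase i) (Finset.erase_ssubset hi) ⟨r, hr'⟩
  have hvX := Finset.mem_of_mem_erase hv
  obtain ⟨u, hu, huv⟩ := hin v hvX
  obtain rfl : u = i := by
    by_contra hui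
    exact hsource u (Finset.mem_erase.2 ⟨hui, hu⟩) huv
  exact hsource r hr' (hdom v hvX huv)

lemma IsEW.wellFounded_arc (hT : F.IsEW T) : WellFounded (F.Arc T) := by
  refine WellFounded.wellFounded_iff_has_min.2 fun X hX => ?_
  simpa using hT.exists_source X.toFinset (Set.toFinset_nonempty.2 hX)

/-! ### Blocks of the canonical toppling of an EW-tableau -/

lemma IsEW.mem_toppledBefore_of_arc (hT : F.IsEW T) (huv : F.Arc T u v)
    (hv : v ∈ F.toppledBefore (F.phiTC T) k) : u ∈ F.toppledBefore (F.phiTC T) k := by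
  induction k generalizing u v with
  | zero => simp [toppledBefore_zero] at hv
  | succ k ih =>
    rw [toppledBefore_succ] at hv ⊢
    obtain hv | hv := hv
    · exact Or.inl (ih huv hv)
    cases k with
    | zero =>
      obtain rfl := mem_canonTop_zero.1 hv
      exact absurd huv (hT.not_arc_zero u)
    | succ k =>
      obtain ⟨hv0, -, hnot, hdeg⟩ := hT.stable_phiTC.mem_canonTop_succ_iff.1 hv
      exact Or.inl ((deg_le_phiTC_add_iff (fun w hw x hxw => ih hxw hw) hv0 hnot).1 hdeg u huv)

lemma IsEW.mem_canonTop_succ_iff (hT : F.IsEW T) :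
    v ∈ F.canonTop (F.phiTC T) (k + 1) ↔
      v ≠ 0 ∧ (v ∈ F.rows ↔ Even (k + 1)) ∧ v ∉ F.toppledBefore (F.phiTC T) (k + 1) ∧
        ∀ u, F.Arc T u v → u ∈ F.toppledBefore (F.phiTC T) (k + 1) := by
  rw [hT.stable_phiTC.mem_canonTop_succ_iff]
  exact and_congr_right fun hv => and_congr_right fun _ => and_congr_right fun hnot =>
    deg_le_phiTC_add_iff (fun _ hw _ huw => hT.mem_toppledBefore_of_arc huw hw) hv hnot

lemma IsEW.exists_mem_canonTop (hT : F.IsEW T) (v : Fin (n + 1)) :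
    ∃ k, v ∈ F.canonTop (F.phiTC T) k := by
  induction v using hT.wellFounded_arc.induction with
  | _ v ih =>
  by_contra! hnot
  choose! block hblock using ih
  obtain ⟨N, hN⟩ := (Set.finite_range block).bddAbove
  obtain ⟨m, hNm, hm⟩ : ∃ m ≥ N, (v ∈ F.rows ↔ Even (m + 1)) := by
    by_cases h : v ∈ F.rows
    · exact ⟨2 * N + 1, by omega, by simp [h, parity_simps]⟩
    · exact ⟨2 * N, by omega, by simp [h, parity_simps]⟩
  refine hnot (m + 1) (hT.mem_canonTop_succ_iff.2
    ⟨fun h => hnot 0 (mem_canonTop_zero.2 h), hm, fun ⟨i, _, hi⟩ => hnot i hi, fun u hu => ?_⟩)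
  exact ⟨block u, Nat.lt_succ_of_le ((hN ⟨u, rfl⟩).trans hNm), hblock u hu⟩

lemma IsEW.mem_canonTop_iff_bIdx_eq (hT : F.IsEW T) :
    v ∈ F.canonTop (F.phiTC T) k ↔ F.bIdx (F.phiTC T) v = k := by
  refine ⟨hT.stable_phiTC.bIdx_eq, ?_⟩
  rintro rfl
  exact Nat.sInf_mem (hT.exists_mem_canonTop v)

lemma IsEW.mem_toppledBefore_iff (hT : F.IsEW T) :
    v ∈ F.toppledBefore (F.phiTC T) k ↔ F.bIdx (F.phiTC T) v < k := by
  simp [toppledBefore, hT.mem_canonTop_iff_bIdx_eq]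

lemma IsEW.mem_rows_iff_even_bIdx (hT : F.IsEW T) (v : Fin (n + 1)) :
    v ∈ F.rows ↔ Even (F.bIdx (F.phiTC T) v) :=
  mem_rows_iff_even_of_mem_canonTop (hT.mem_canonTop_iff_bIdx_eq.2 rfl)

lemma IsEW.even_bIdx_iff_of_arc (hT : F.IsEW T) (h : F.Arc T u v) :
    Even (F.bIdx (F.phiTC T) u) ↔ ¬Even (F.bIdx (F.phiTC T) v) := by
  simpa only [← hT.mem_rows_iff_even_bIdx] using h.mem_rows_iff

lemma IsEW.bIdx_lt_of_arc (hT : F.IsEW T) (h : F.Arc T u v) :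
    F.bIdx (F.phiTC T) u < F.bIdx (F.phiTC T) v := by
  have hv : v ∈ F.toppledBefore (F.phiTC T) (F.bIdx (F.phiTC T) v + 1) :=
    hT.mem_toppledBefore_iff.2 (Nat.lt_succ_self _)
  have hle := hT.mem_toppledBefore_iff.1 (hT.mem_toppledBefore_of_arc h hv)
  have hparity := hT.even_bIdx_iff_of_arc h
  grind

lemma IsEW.exists_arc_bIdx_add_one_eq (hT : F.IsEW T) (hv : v ≠ 0) :
    ∃ u, F.Arc T u v ∧ F.bIdx (F.phiTC T) u + 1 = F.bIdx (F.phiTC T) v := by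
  by_contra! hne
  have hearly : ∀ u, F.Arc T u v → F.bIdx (F.phiTC T) u + 2 < F.bIdx (F.phiTC T) v := by
    intro u hu
    have := hT.bIdx_lt_of_arc hu
    have := hne u hu
    have hparity := hT.even_bIdx_iff_of_arc hu
    grind
  obtain ⟨u, hu⟩ := hT.exists_arc hv
  obtain ⟨m, hm⟩ : ∃ m, F.bIdx (F.phiTC T) v = m + 3 :=
    Nat.exists_eq_add_of_le' (by have := hearly u hu; omega)
  -- Then `v` would already have been unstable two blocks earlier.
  have hmem : v ∈ F.canonTop (F.phiTC T) (m + 1) := by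
    refine hT.mem_canonTop_succ_iff.2 ⟨hv, ?_, ?_, fun u hu => ?_⟩
    · rw [hT.mem_rows_iff_even_bIdx, hm]
      simp [parity_simps]
    · rw [hT.mem_toppledBefore_iff]
      omega
    · have := hearly u hu
      rw [hT.mem_toppledBefore_iff]
      omega
  have := hT.mem_canonTop_iff_bIdx_eq.1 hmem
  omega

/-! ### Cornersupport entries -/

lemma suppS_eq_true_iff {i j : Fin (n + 1)} :
    F.suppS T i j = true ↔ F.bIdx (F.phiTC T) i < F.bIdx (F.phiTC T) j := by
  simp [suppS]

lemma suppS_eq_false_iff {i j : Fin (n + 1)} :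
    F.suppS T i j = false ↔ F.bIdx (F.phiTC T) j ≤ F.bIdx (F.phiTC T) i := by
  simp [suppS]

lemma IsEW.suppS_eq_of_cell (hT : F.IsEW T) {i j : Fin (n + 1)} (h : F.Cell i j) :
    F.suppS T i j = T i j := by
  cases hij : T i j
  · exact suppS_eq_false_iff.2 (hT.bIdx_lt_of_arc (Or.inr ⟨h, hij⟩)).le
  · exact suppS_eq_true_iff.2 (hT.bIdx_lt_of_arc (Or.inl ⟨h, hij⟩))

lemma IsEW.cornersupport_iff_of_eq_false (hT : F.IsEW T) {j k : Fin (n + 1)} (hj : j ∈ F.rows)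
    (hk : k ∉ F.rows) (hjk : T j k = false) :
    F.Cornersupport T j k ↔ F.bIdx (F.phiTC T) k + 1 < F.bIdx (F.phiTC T) j := by
  simp only [Cornersupport, hjk, Bool.not_false, suppS_eq_true_iff, suppS_eq_false_iff]
  constructor
  · rintro ⟨j', k', hj', -, -, -, hj'k', hkj', hk'j⟩
    have hne : F.bIdx (F.phiTC T) k ≠ F.bIdx (F.phiTC T) j' := fun h =>
      hk ((hT.mem_rows_iff_even_bIdx k).2 (h ▸ (hT.mem_rows_iff_even_bIdx j').1 hj'))
    omega
  · intro hlt
    have hj0 : j ≠ 0 := by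
      rintro rfl
      have := hT.mem_canonTop_iff_bIdx_eq.1 (mem_canonTop_zero (F := F).2 rfl)
      omega
    obtain ⟨k', hk'j, hbk'⟩ := hT.exists_arc_bIdx_add_one_eq hj0
    have hk' : k' ∉ F.rows := fun h => hk'j.mem_rows_iff.1 h hj
    obtain ⟨j', hj'k', hbj'⟩ := hT.exists_arc_bIdx_add_one_eq (v := k')
      (by rintro rfl; exact hk' F.zero_mem)
    refine ⟨j', k', hj'k'.mem_rows_iff.2 hk', hk', ?_, ?_, by omega, by omega, by omega⟩ <;>
    · rintro rfl
      omega

end Ferrers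

/-- **Lemma, part (a).** If the row vertex `j` lies in `Uˡ`
(`= canonTop (2l)`) and `k` is a column vertex with `j < k`, then `k ∈ Vˡ`
(`= canonTop (2l - 1)`) if and only if `S_{jk} = 0` and this `0` is not a
cornersupport entry. -/
theorem mem_V_iff_noncornersupport_zero {n : ℕ} (F : Ferrers n)
    (T : Fin (n + 1) → Fin (n + 1) → Bool) (hT : F.IsEW T)
    (j k : Fin (n + 1)) (hj : j ∈ F.rows) (hk : k ∉ F.rows) (hjk : j < k)
    (l : ℕ) (hjU : j ∈ F.canonTop (F.phiTC T) (2 * l)) :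
    k ∈ F.canonTop (F.phiTC T) (2 * l - 1) ↔
      F.suppS T j k = false ∧ ¬F.Cornersupport T j k := by
  have hST : F.suppS T j k = T j k := hT.suppS_eq_of_cell ⟨hj, hk, hjk⟩
  have hbj : F.bIdx (F.phiTC T) j = 2 * l := hT.mem_canonTop_iff_bIdx_eq.1 hjU
  have hodd : Odd (F.bIdx (F.phiTC T) k) :=
    Nat.not_even_iff_odd.1 (mt (hT.mem_rows_iff_even_bIdx k).2 hk)
  -- If `l = 0`, then `2 * l - 1` truncates to `0`, while the block index of `k` is odd.
  calc k ∈ F.canonTop (F.phiTC T) (2 * l - 1)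
    _ ↔ F.bIdx (F.phiTC T) k = 2 * l - 1 := hT.mem_canonTop_iff_bIdx_eq
    _ ↔ F.bIdx (F.phiTC T) k ≤ F.bIdx (F.phiTC T) j ∧
        ¬F.bIdx (F.phiTC T) k + 1 < F.bIdx (F.phiTC T) j := by grind
    _ ↔ F.suppS T j k = false ∧ ¬F.Cornersupport T j k := by
      rw [← Ferrers.suppS_eq_false_iff]
      exact and_congr_right fun h =>
        not_congr (hT.cornersupport_iff_of_eq_false hj hk (hST ▸ h)).symm
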